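/- Conservative extension: for every fully static term t (a λ_SEC term, containing no unknown label ?) and every static security type S, t is typable at S in the static syntax-directed λ_SEC type system if and only if t is typable at S in the gradual type system of λ_S̃EC. -/

import Mathlib

/-!
On fully static data the gradual operations collapse to the static ones: `γ` of an embedded type
is a singleton (`gammaS_toG`), so consistent subtyping is subtyping, and the lifted label
operations return the static join and meet, hence so do stamping and the partial join and meet of
types (`stamp_toG`, `ggsjoin_ggsmeet_toG`). The forward direction is then a rule-by-rule translation
of derivations (`SD.toGT`). For the converse, structural induction on the term shows that any
gradual type of a static term in a static context is the embedding of a static type derivable in the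
static system (`GT.exists_SD`); injectivity of the embedding identifies it with the given type.
-/

/-- Static security types: S ::= Bool_ℓ | S →_ℓ S. -/
inductive SType (L : Type) where
  | bool (l : L)
  | arrow (S1 : SType L) (l : L) (S2 : SType L)

variable {L : Type} [Lattice L] [BoundedOrder L]

/-- Static subtyping. -/
inductive SSub : SType L → SType L → Prop where
  | bool {l l' : L} : l ≤ l' → SSub (.bool l) (.bool l')
  | arrow {S1 S1' S2 S2' : SType L} {l l' : L} :
      SSub S1' S1 → SSub S2 S2' → l ≤ l' →
      SSub (.arrow S1 l S2) (.arrow S1' l' S2')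

/-- Label stamping on static types. -/
def SType.stamp : SType L → L → SType L
  | .bool l, l' => .bool (l ⊔ l')
  | .arrow S1 l S2, l' => .arrow S1 (l ⊔ l') S2

mutual
/-- Partial subtyping join ⋎. -/
def sjoin : SType L → SType L → Option (SType L)
  | .bool l, .bool l' => some (.bool (l ⊔ l'))
  | .arrow S11 l S12, .arrow S21 l' S22 => do
      let m ← smeet S11 S21
      let j ← sjoin S12 S22
      pure (.arrow m (l ⊔ l') j)
  | _, _ => none
/-- Partial subtyping meet ⋏. -/
def smeet : SType L → SType L → Option (SType L)
  | .bool l, .bool l' => some (.bool (l ⊓ l'))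
  | .arrow S11 l S12, .arrow S21 l' S22 => do
      let j ← sjoin S11 S21
      let m ← smeet S12 S22
      pure (.arrow j (l ⊓ l') m)
  | _, _ => none
end
/-- Ascription-free λ_SEC terms. -/
inductive Tm (L : Type) where
  | var (x : String)
  | bool (b : Bool) (l : L)
  | lam (x : String) (S : SType L) (t : Tm L) (l : L)
  | app (t1 t2 : Tm L)
  | binop (op : Bool → Bool → Bool) (t1 t2 : Tm L)
  | ite (t1 t2 t3 : Tm L)

abbrev Ctx (L : Type) := List (String × SType L)

/-- The syntax-directed λ_SEC type system. -/
inductive SD : Ctx L → Tm L → SType L → Prop where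
  | var {Γ : Ctx L} {x S} : List.lookup x Γ = some S → SD Γ (.var x) S
  | bool {Γ : Ctx L} {b l} : SD Γ (.bool b l) (.bool l)
  | lam {Γ : Ctx L} {x S1 t S2 l} :
      SD ((x, S1) :: Γ) t S2 → SD Γ (.lam x S1 t l) (.arrow S1 l S2)
  | binop {Γ : Ctx L} {op t1 t2 l1 l2} :
      SD Γ t1 (.bool l1) → SD Γ t2 (.bool l2) →
      SD Γ (.binop op t1 t2) (.bool (l1 ⊔ l2))
  | app {Γ : Ctx L} {t1 t2 S11 l S12 S2} :
      SD Γ t1 (.arrow S11 l S12) → SD Γ t2 S2 → SSub S2 S11 →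
      SD Γ (.app t1 t2) (S12.stamp l)
  | ite {Γ : Ctx L} {t1 t2 t3 l S1 S2 Sj} :
      SD Γ t1 (.bool l) → SD Γ t2 S1 → SD Γ t3 S2 → sjoin S1 S2 = some Sj →
      SD Γ (.ite t1 t2 t3) (Sj.stamp l)

/-- Zdancewic's declarative type system, with subsumption. -/
inductive ZT : Ctx L → Tm L → SType L → Prop where
  | var {Γ : Ctx L} {x S} : List.lookup x Γ = some S → ZT Γ (.var x) S
  | bool {Γ : Ctx L} {b l} : ZT Γ (.bool b l) (.bool l)
  | lam {Γ : Ctx L} {x S1 t S2 l} :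
      ZT ((x, S1) :: Γ) t S2 → ZT Γ (.lam x S1 t l) (.arrow S1 l S2)
  | binop {Γ : Ctx L} {op t1 t2 l1 l2} :
      ZT Γ t1 (.bool l1) → ZT Γ t2 (.bool l2) →
      ZT Γ (.binop op t1 t2) (.bool (l1 ⊔ l2))
  | app {Γ : Ctx L} {t1 t2 S11 l S12} :
      ZT Γ t1 (.arrow S11 l S12) → ZT Γ t2 S11 →
      ZT Γ (.app t1 t2) (S12.stamp l)
  | ite {Γ : Ctx L} {t1 t2 t3 l} {S : SType L} :
      ZT Γ t1 (.bool l) → ZT Γ t2 (S.stamp l) → ZT Γ t3 (S.stamp l) →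
      ZT Γ (.ite t1 t2 t3) (S.stamp l)
  | sub {Γ : Ctx L} {t S' S} : ZT Γ t S' → SSub S' S → ZT Γ t S
/-- Gradual labels: a static label or the unknown label ?. -/
inductive GLabel (L : Type) where
  | lab (l : L)
  | unk

/-- Label concretization γ_ℓ. -/
def gammaL {L : Type} : GLabel L → Set L
  | .lab l => {l}
  | .unk => Set.univ

/-- Label precision: ℓ̃₁ ⊑ ℓ̃₂ iff γ_ℓ(ℓ̃₁) ⊆ γ_ℓ(ℓ̃₂). -/
def lprec {L : Type} (a b : GLabel L) : Prop := gammaL a ⊆ gammaL b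

-- Label abstraction α_ℓ: singleton sets map to their element, every other
-- nonempty set maps to ?. (It is undefined — arbitrary here — on the empty set.)
open Classical in
noncomputable def alphaL {L : Type} (C : Set L) : GLabel L :=
  if h : ∃ l, C = {l} then .lab h.choose else .unk

/-- Consistent label ordering ℓ̃₁ ≾ ℓ̃₂. -/
def clle {L : Type} [Lattice L] [BoundedOrder L] (a b : GLabel L) : Prop :=
  ∃ l1 ∈ gammaL a, ∃ l2 ∈ gammaL b, l1 ≤ l2
/-- Gradual security types: S̃ ::= Bool_ℓ̃ | S̃ →_ℓ̃ S̃. -/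
inductive GType (L : Type) where
  | bool (l : GLabel L)
  | arrow (S1 : GType L) (l : GLabel L) (S2 : GType L)

/-- Type concretization γ_S. -/
def gammaS {L : Type} : GType L → Set (SType L)
  | .bool g => {T | ∃ l ∈ gammaL g, T = .bool l}
  | .arrow G1 g G2 =>
      {T | ∃ T1 ∈ gammaS G1, ∃ T2 ∈ gammaS G2, ∃ l ∈ gammaL g, T = .arrow T1 l T2}

/-- Type precision: S̃₁ ⊑ S̃₂ iff γ_S(S̃₁) ⊆ γ_S(S̃₂). -/
def gtprec {L : Type} (a b : GType L) : Prop := gammaS a ⊆ gammaS b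

variable {L : Type} [Lattice L] [BoundedOrder L]

/-- Consistent subtyping S̃₁ ≲ S̃₂. -/
def ConsSub (a b : GType L) : Prop :=
  ∃ T1 ∈ gammaS a, ∃ T2 ∈ gammaS b, SSub T1 T2

/-- Gradual label join ⊔̃, as the abstraction of the lifted join. -/
noncomputable def gljoin (a b : GLabel L) : GLabel L :=
  alphaL {l | ∃ l1 ∈ gammaL a, ∃ l2 ∈ gammaL b, l = l1 ⊔ l2}

/-- Gradual label meet ⊓̃, as the abstraction of the lifted meet. -/
noncomputable def glmeet (a b : GLabel L) : GLabel L :=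
  alphaL {l | ∃ l1 ∈ gammaL a, ∃ l2 ∈ gammaL b, l = l1 ⊓ l2}

/-- Gradual label stamping on gradual types. -/
noncomputable def GType.stamp : GType L → GLabel L → GType L
  | .bool g, g' => .bool (gljoin g g')
  | .arrow S1 g S2, g' => .arrow S1 (gljoin g g') S2

mutual
/-- Gradual (partial) subtyping join ⋎̃. -/
noncomputable def ggsjoin : GType L → GType L → Option (GType L)
  | .bool a, .bool b => some (.bool (gljoin a b))
  | .arrow S11 a S12, .arrow S21 b S22 => do
      let m ← ggsmeet S11 S21
      let j ← ggsjoin S12 S22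
      pure (.arrow m (gljoin a b) j)
  | _, _ => none
/-- Gradual (partial) subtyping meet ⋏̃. -/
noncomputable def ggsmeet : GType L → GType L → Option (GType L)
  | .bool a, .bool b => some (.bool (glmeet a b))
  | .arrow S11 a S12, .arrow S21 b S22 => do
      let j ← ggsjoin S11 S21
      let m ← ggsmeet S12 S22
      pure (.arrow j (glmeet a b) m)
  | _, _ => none
end
/-- Gradual source terms of λ_S̃EC (with ascription). -/
inductive GTm (L : Type) where
  | var (x : String)
  | bool (b : Bool) (l : GLabel L)
  | lam (x : String) (S : GType L) (t : GTm L) (l : GLabel L)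
  | app (t1 t2 : GTm L)
  | binop (op : Bool → Bool → Bool) (t1 t2 : GTm L)
  | ite (t1 t2 t3 : GTm L)
  | asc (t : GTm L) (S : GType L)

abbrev GCtx (L : Type) := List (String × GType L)

variable {L : Type} [Lattice L] [BoundedOrder L]

/-- The gradual type system of λ_S̃EC. -/
inductive GT : GCtx L → GTm L → GType L → Prop where
  | var {Γ : GCtx L} {x S} : List.lookup x Γ = some S → GT Γ (.var x) S
  | bool {Γ : GCtx L} {b l} : GT Γ (.bool b l) (.bool l)
  | lam {Γ : GCtx L} {x S1 t S2 l} :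
      GT ((x, S1) :: Γ) t S2 → GT Γ (.lam x S1 t l) (.arrow S1 l S2)
  | binop {Γ : GCtx L} {op t1 t2 l1 l2} :
      GT Γ t1 (.bool l1) → GT Γ t2 (.bool l2) →
      GT Γ (.binop op t1 t2) (.bool (gljoin l1 l2))
  | app {Γ : GCtx L} {t1 t2 S11 l S12 S2} :
      GT Γ t1 (.arrow S11 l S12) → GT Γ t2 S2 → ConsSub S2 S11 →
      GT Γ (.app t1 t2) (S12.stamp l)
  | ite {Γ : GCtx L} {t1 t2 t3 l S1 S2 Sj} :
      GT Γ t1 (.bool l) → GT Γ t2 S1 → GT Γ t3 S2 → ggsjoin S1 S2 = some Sj →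
      GT Γ (.ite t1 t2 t3) (Sj.stamp l)
  | asc {Γ : GCtx L} {t S1 S2} :
      GT Γ t S1 → ConsSub S1 S2 → GT Γ (.asc t S2) S2
/-- Embedding of static types into gradual types. -/
def SType.toG {L : Type} : SType L → GType L
  | .bool l => .bool (.lab l)
  | .arrow S1 l S2 => .arrow S1.toG (.lab l) S2.toG

/-- Embedding of fully static λ_SEC terms into gradual terms. -/
def Tm.toG {L : Type} : Tm L → GTm L
  | .var x => .var x
  | .bool b l => .bool b (.lab l)
  | .lam x S t l => .lam x S.toG t.toG (.lab l)
  | .app t1 t2 => .app t1.toG t2.toG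
  | .binop op t1 t2 => .binop op t1.toG t2.toG
  | .ite t1 t2 t3 => .ite t1.toG t2.toG t3.toG

theorem alphaL_singleton {L : Type} (l : L) : alphaL {l} = .lab l := by
  have h : ∃ l', ({l} : Set L) = {l'} := ⟨l, rfl⟩
  have hc : l = h.choose := Set.singleton_injective h.choose_spec
  rw [alphaL, dif_pos h, ← hc]

theorem gljoin_lab {L : Type} [Lattice L] [BoundedOrder L] (a b : L) :
    gljoin (.lab a) (.lab b) = .lab (a ⊔ b) := by
  simp [gljoin, gammaL, alphaL_singleton]

theorem glmeet_lab {L : Type} [Lattice L] [BoundedOrder L] (a b : L) :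
    glmeet (.lab a) (.lab b) = .lab (a ⊓ b) := by
  simp [glmeet, gammaL, alphaL_singleton]

theorem stamp_toG {L : Type} [Lattice L] [BoundedOrder L] (S : SType L) (l : L) :
    S.toG.stamp (.lab l) = (S.stamp l).toG := by
  cases S <;> simp [SType.toG, SType.stamp, GType.stamp, gljoin_lab]

theorem gammaS_toG {L : Type} (S : SType L) : gammaS S.toG = {S} := by
  induction S with
  | bool l => ext T; simp [SType.toG, gammaS, gammaL]
  | arrow S1 l S2 ih1 ih2 => ext T; simp [SType.toG, gammaS, gammaL, ih1, ih2]

theorem consSub_toG {L : Type} [Lattice L] [BoundedOrder L] (S T : SType L) :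
    ConsSub S.toG T.toG ↔ SSub S T := by
  simp [ConsSub, gammaS_toG]

/-- Join and meet call each other on arrow domains, so both equations are proved together. -/
theorem ggsjoin_ggsmeet_toG {L : Type} [Lattice L] [BoundedOrder L] (S T : SType L) :
    ggsjoin S.toG T.toG = (sjoin S T).map SType.toG ∧
      ggsmeet S.toG T.toG = (smeet S T).map SType.toG := by
  induction S generalizing T with
  | bool l =>
    cases T <;> simp [SType.toG, ggsjoin, ggsmeet, sjoin, smeet, gljoin_lab, glmeet_lab]
  | arrow S1 l S2 ih1 ih2 =>
    cases T with
    | bool l' => simp [SType.toG, ggsjoin, ggsmeet, sjoin, smeet]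
    | arrow T1 l' T2 =>
      simp only [SType.toG, ggsjoin, ggsmeet, sjoin, smeet, gljoin_lab, glmeet_lab, ih1, ih2]
      constructor
      · cases smeet S1 T1 <;> cases sjoin S2 T2 <;> simp [SType.toG]
      · cases sjoin S1 T1 <;> cases smeet S2 T2 <;> simp [SType.toG]

theorem toG_injective {L : Type} : Function.Injective (SType.toG (L := L)) := by
  intro S T h
  have h' : ({S} : Set (SType L)) = {T} := by rw [← gammaS_toG, ← gammaS_toG, h]
  exact Set.singleton_injective h'

/-- Pointwise embedding of static typing contexts into gradual ones. -/
def ctxToG {L : Type} (Γ : Ctx L) : GCtx L := Γ.map fun p => (p.1, p.2.toG)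

theorem lookup_ctxToG {L : Type} (Γ : Ctx L) (x : String) :
    List.lookup x (ctxToG Γ) = (List.lookup x Γ).map SType.toG := by
  induction Γ with
  | nil => rfl
  | cons p Γ ih =>
    obtain ⟨y, S⟩ := p
    simp only [ctxToG, List.map_cons, List.lookup_cons] at ih ⊢
    cases x == y <;> simp [ih]

theorem SD.toGT {L : Type} [Lattice L] [BoundedOrder L] {Γ : Ctx L} {t : Tm L} {S : SType L}
    (h : SD Γ t S) : GT (ctxToG Γ) t.toG S.toG := by
  induction h with
  | var h => exact .var (by rw [lookup_ctxToG, h]; rfl)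
  | bool => exact .bool
  | lam _ ih => exact .lam ih
  | binop _ _ ih1 ih2 =>
    rw [SType.toG, ← gljoin_lab]
    exact .binop ih1 ih2
  | app _ _ hs ih1 ih2 =>
    rw [← stamp_toG]
    exact .app ih1 ih2 ((consSub_toG _ _).2 hs)
  | ite _ _ _ hj ih1 ih2 ih3 =>
    rw [← stamp_toG]
    exact .ite ih1 ih2 ih3 (by rw [(ggsjoin_ggsmeet_toG _ _).1, hj]; rfl)

/-- The gradual type is not assumed static: that every gradual type of a static term in a static
context is itself static is part of the conclusion, and is what lets the induction go through the
premises of the typing rules. -/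
theorem GT.exists_SD {L : Type} [Lattice L] [BoundedOrder L] (t : Tm L) :
    ∀ (Γ : Ctx L) (G : GType L), GT (ctxToG Γ) t.toG G → ∃ S : SType L, G = S.toG ∧ SD Γ t S := by
  induction t with
  | var x =>
    intro Γ G h
    cases h with
    | var h =>
      rw [lookup_ctxToG, Option.map_eq_some_iff] at h
      obtain ⟨S, hS, rfl⟩ := h
      exact ⟨S, rfl, .var hS⟩
  | bool b l =>
    intro Γ G h
    cases h
    exact ⟨.bool l, rfl, .bool⟩
  | lam x S1 t l ih =>
    intro Γ G h
    cases h with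
    | lam h =>
      obtain ⟨S2, rfl, h2⟩ := ih ((x, S1) :: Γ) _ h
      exact ⟨.arrow S1 l S2, rfl, .lam h2⟩
  | app t1 t2 ih1 ih2 =>
    intro Γ G h
    cases h with
    | app h1 h2 hs =>
      obtain ⟨S1, e1, d1⟩ := ih1 _ _ h1
      obtain ⟨S2, rfl, d2⟩ := ih2 _ _ h2
      cases S1 with
      | bool l => simp [SType.toG] at e1
      | arrow S11 l S12 =>
        simp only [SType.toG, GType.arrow.injEq] at e1
        obtain ⟨rfl, rfl, rfl⟩ := e1
        exact ⟨S12.stamp l, stamp_toG _ _, .app d1 d2 ((consSub_toG _ _).1 hs)⟩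
  | binop op t1 t2 ih1 ih2 =>
    intro Γ G h
    cases h with
    | binop h1 h2 =>
      obtain ⟨S1, e1, d1⟩ := ih1 _ _ h1
      obtain ⟨S2, e2, d2⟩ := ih2 _ _ h2
      cases S1 with
      | arrow _ _ _ => simp [SType.toG] at e1
      | bool l1 =>
        cases S2 with
        | arrow _ _ _ => simp [SType.toG] at e2
        | bool l2 =>
          simp only [SType.toG, GType.bool.injEq] at e1 e2
          subst e1 e2
          exact ⟨.bool (l1 ⊔ l2), by rw [gljoin_lab]; rfl, .binop d1 d2⟩
  | ite t1 t2 t3 ih1 ih2 ih3 =>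
    intro Γ G h
    cases h with
    | ite h1 h2 h3 hj =>
      obtain ⟨S1, e1, d1⟩ := ih1 _ _ h1
      obtain ⟨S2, rfl, d2⟩ := ih2 _ _ h2
      obtain ⟨S3, rfl, d3⟩ := ih3 _ _ h3
      rw [(ggsjoin_ggsmeet_toG _ _).1, Option.map_eq_some_iff] at hj
      obtain ⟨Sj, hj, rfl⟩ := hj
      cases S1 with
      | arrow _ _ _ => simp [SType.toG] at e1
      | bool l =>
        simp only [SType.toG, GType.bool.injEq] at e1
        subst e1
        exact ⟨Sj.stamp l, stamp_toG _ _, .ite d1 d2 d3 hj⟩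

/-- the gradual type system of λ_S̃EC is a conservative extension
of the static syntax-directed λ_SEC type system on fully static terms. -/
theorem conservative_extension {L : Type} [Lattice L] [BoundedOrder L]
    (t : Tm L) (S : SType L) :
    SD [] t S ↔ GT [] t.toG S.toG := by
  constructor
  · exact fun h => h.toGT
  · intro h
    obtain ⟨T, hT, hd⟩ := GT.exists_SD t [] _ h
    rwa [toG_injective hT]
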